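/- Let A be a finite alphabet of size σ ≥ 2. There exists a constant C (depending only on σ) such that for every n ≥ 1, the expected length of the maximal unbordered factor of a uniformly random string of length n over A satisfies (1/σ^n) · Σ_{S ∈ A^n} b(S) ≥ n·(1 − ξ(σ)·σ^{−4}) − C, where ξ(2) = 8 and ξ(σ) = (2σ³ − 2σ²)/((σ−2)(σ² − 2σ + 2)) for σ > 2. -/

import Mathlib

open List Finset Filter

/-- `S` is unbordered: it has no nonempty proper prefix that is also a suffix. -/
def Unbordered {α : Type*} (S : List α) : Prop :=
  ∀ B : List α, B ≠ [] → B.length < S.length → B <+: S → ¬ B <:+ S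

/-- The length of the maximal unbordered factor of `S`. -/
noncomputable def muf {α : Type*} (S : List α) : ℕ :=
  sSup {k | ∃ F : List α, F <:+: S ∧ Unbordered F ∧ F.length = k}

/-!
In a random word of length `n` try the two factors starting at `0` and at `M = 3 * r` and ending
with a run of `r` equal letters that differ from the first letter of the factor. Such a factor has
no border of length at most `r`, and a border of length between `r` and `M` would put a run of
length `r` into its first `M` positions; for both starting positions at once this has probability
only `O(r ^ 2 * σ ^ (-2 * r))`. Borders of length at least `M` are rarer still, and within about
`2 * σ * r ^ 2 * σ ^ r` letters of the end there is a suitable run except with probability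
`σ * exp (-2 * σ * r)`. So losing more than `K_r = O(r ^ 2 * σ ^ r)` letters has probability
`O(r ^ 2 * σ ^ (-2 * r))`, and since `∑ r, K_(r+1) * r ^ 2 * σ ^ (-2 * r)` converges, the expected
loss is bounded uniformly in `n`.
-/

open MeasureTheory ProbabilityTheory

section Factors

variable {α : Type*}

theorem Unbordered.length_le_muf {S F : List α} (hF : Unbordered F) (hFS : F <:+: S) :
    F.length ≤ muf S :=
  le_csSup ⟨S.length, by rintro k ⟨G, hG, -, rfl⟩; exact hG.length_le⟩ ⟨F, hFS, hF, rfl⟩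

/-- The factors of `S` of length `m` starting at `p` and at `e` coincide. When `p < e`, this says
that `m` is the length of a border of the factor of `S` occupying `[p, e + m)`. -/
def FactorsMatch (S : List α) (p e m : ℕ) : Prop := ∀ i < m, S[p + i]? = S[e + i]?

theorem unbordered_take_drop {S : List α} {p l : ℕ} (hl : p + l ≤ S.length)
    (h : ∀ m, 0 < m → m < l → ¬ FactorsMatch S p (p + l - m) m) :
    Unbordered ((S.drop p).take l) := by
  intro B hB hBl hpre hsuf
  have hlen : ((S.drop p).take l).length = l := by
    simp only [List.length_take, List.length_drop]; omega
  rw [hlen] at hBl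
  refine h B.length (List.length_pos_iff.2 hB) hBl fun i hi => ?_
  have hfirst : B[i]? = S[p + i]? := by
    rw [List.prefix_iff_eq_take.1 hpre]
    simp only [List.getElem?_take, List.getElem?_drop]
    grind
  have hlast : B[i]? = S[p + l - B.length + i]? := by
    conv_lhs => rw [List.suffix_iff_eq_drop.1 hsuf, hlen]
    simp only [List.getElem?_take, List.getElem?_drop]
    grind
  exact hfirst.symm.trans hlast

/-- The letter `c` occupies the positions `[e, e + r)` of `S`. -/
def RunAt (S : List α) (c : α) (r e : ℕ) : Prop := ∀ i < r, S[e + i]? = some c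

/-- The interval `[lo, hi)` of positions of `S` contains `r` consecutive copies of `c`. -/
def HasRun (S : List α) (c : α) (r lo hi : ℕ) : Prop :=
  ∃ e, lo ≤ e ∧ e + r ≤ hi ∧ RunAt S c r e

/-- Some factor `[p, e + m)` of `S` that starts at `p` and ends at distance at most `k` from the
end of `S` has a border of length `m ≥ M`. -/
def HasLongBorder (S : List α) (p k M : ℕ) : Prop :=
  ∃ e m, S.length - k ≤ e + m ∧ e + m ≤ S.length ∧ M ≤ m ∧ p < e ∧ FactorsMatch S p e m

theorem FactorsMatch.runAt {S : List α} {c : α} {p e m r : ℕ} (h : FactorsMatch S p e m)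
    (hr : r ≤ m) (hrun : RunAt S c r (e + m - r)) : RunAt S c r (p + (m - r)) := fun i hi => by
  have := h (m - r + i) (by omega)
  rw [show p + (m - r) + i = p + (m - r + i) by omega, this,
    show e + (m - r + i) = e + m - r + i by omega, hrun i hi]

/- Borders of length at most `r` are excluded by their first letter, those of length between `r`
and `M` because they would place a run near the start of the factor. -/
theorem sub_le_muf [Nontrivial α] {S : List α} {p r M k : ℕ}
    (hstart : ∀ c, ¬ HasRun S c r p (p + M))
    (hend : ∀ c, HasRun S c r (S.length - k) S.length) (hlong : ¬ HasLongBorder S p k M) :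
    S.length - k - p ≤ muf S := by
  rcases le_or_gt S.length p with hp | hp
  · omega
  obtain ⟨c, hc⟩ := exists_ne S[p]
  obtain ⟨e, hke, heS, hrun⟩ := hend c
  rcases lt_or_ge (e + r) p with hep | hpe
  · omega
  obtain ⟨l, hl⟩ := Nat.exists_eq_add_of_le hpe
  have hu : Unbordered ((S.drop p).take l) := by
    refine unbordered_take_drop (by omega) fun m hm hml hmatch => ?_
    rcases le_or_gt M m with hMm | hmM
    · exact hlong ⟨_, m, by omega, by omega, hMm, by omega, hmatch⟩
    rcases le_or_gt m r with hmr | hrm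
    · have hfirst := hmatch 0 hm
      have hlast := hrun (r - m) (by omega)
      rw [show p + l - m + 0 = e + (r - m) by omega, hlast, Nat.add_zero,
        List.getElem?_eq_getElem hp] at hfirst
      exact hc (Option.some_injective _ hfirst).symm
    · refine hstart c ⟨p + (m - r), by omega, by omega, hmatch.runAt hrm.le ?_⟩
      rwa [show p + l - m + m - r = e by omega]
  have := hu.length_le_muf ((List.take_prefix _ _).isInfix.trans (List.drop_suffix _ _).isInfix)
  simp only [List.length_take, List.length_drop] at this
  omega

theorem hasRun_or_not_hasRun_or_hasLongBorder [Nontrivial α] {S : List α} {r M k : ℕ}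
    (h : muf S + (k + M) < S.length) :
    ((∃ c, HasRun S c r 0 (0 + M)) ∧ ∃ c, HasRun S c r M (M + M)) ∨
      (∃ c, ¬ HasRun S c r (S.length - k) S.length) ∨
        HasLongBorder S 0 k M ∨ HasLongBorder S M k M := by
  by_contra! hgood
  obtain ⟨hstart, hend, hlong₀, hlongM⟩ := hgood
  by_cases h₀ : ∃ c, HasRun S c r 0 (0 + M)
  · have := sub_le_muf (hstart h₀) hend hlongM
    omega
  · have := sub_le_muf (not_exists.1 h₀) hend hlong₀
    omega

theorem runAt_ofFn_iff {n : ℕ} {f : Fin n → α} {c : α} {r e : ℕ} (he : e + r ≤ n) :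
    RunAt (List.ofFn f) c r e ↔ ∀ i : Fin n, (i : ℕ) ∈ Finset.Ico e (e + r) → f i = c := by
  refine ⟨fun h i hi => ?_, fun h i hi => ?_⟩
  · have := h (i - e) (by grind)
    simpa [show e + (i - e) = (i : ℕ) by grind] using this
  · simpa [show e + i < n by omega] using h ⟨e + i, by omega⟩ (by grind)

theorem FactorsMatch.apply_eq {n : ℕ} {f : Fin n → α} {p e m : ℕ}
    (h : FactorsMatch (List.ofFn f) p e m) {i j : Fin n} (hi : (i : ℕ) ∈ Finset.Ico e (e + m))
    (hij : (i : ℕ) = e - p + j) (hpe : p ≤ e) : f i = f j := by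
  have := h (i - e) (by grind)
  rw [show p + (i - e) = (j : ℕ) by grind, show e + (i - e) = (i : ℕ) by grind] at this
  simpa using this.symm

end Factors

/-- The uniform distribution on the words of length `n` over the alphabet `α`. -/
noncomputable abbrev randomWord (α : Type*) [MeasurableSpace α] (n : ℕ) : Measure (Fin n → α) :=
  uniformOn Set.univ

/-- The probability that a uniformly random letter of `α` is a given one. -/
noncomputable abbrev letterProb (α : Type*) [Fintype α] : ℝ := (Fintype.card α : ℝ)⁻¹

theorem letterProb_pow_le_one (α : Type*) [Fintype α] (k : ℕ) : letterProb α ^ k ≤ 1 :=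
  pow_le_one₀ (by positivity) (Nat.cast_inv_le_one _)

theorem card_pow_mul_letterProb_pow (α : Type*) [Fintype α] [Nonempty α] (k : ℕ) :
    (Fintype.card α : ℝ) ^ k * letterProb α ^ k = 1 := by
  rw [← mul_pow, mul_inv_cancel₀ (by positivity), one_pow]

theorem letterProb_le_half (α : Type*) [Fintype α] [Nontrivial α] : letterProb α ≤ 2⁻¹ :=
  inv_anti₀ two_pos (mod_cast Fintype.one_lt_card)

theorem sum_Ico_letterProb_pow_le (α : Type*) [Fintype α] [Nontrivial α] (a b : ℕ) :
    ∑ m ∈ Finset.Ico a b, letterProb α ^ m ≤ 2 * letterProb α ^ a := by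
  have hx := letterProb_le_half α
  calc _ ≤ letterProb α ^ a / (1 - letterProb α) :=
        geom_sum_Ico_le_of_lt_one (by positivity) (by linarith)
    _ ≤ _ := by
        rw [div_le_iff₀ (by linarith)]
        nlinarith [show 0 ≤ letterProb α ^ a by positivity]

section RandomWord

variable {α : Type*} [Fintype α] [MeasurableSpace α] [MeasurableSingletonClass α] {n : ℕ}

theorem randomWord_real_apply (E : Set (Fin n → α)) :
    (randomWord α n).real E = E.ncard * letterProb α ^ n := by
  rw [measureReal_def, uniformOn_univ, Measure.count_apply_finite E E.toFinite,
    ← Set.ncard_eq_toFinset_card E]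
  simp [div_eq_mul_inv]

theorem randomWord_real_le_of_determined [Nonempty α] {E : Set (Fin n → α)} (B : Finset (Fin n))
    (h : ∀ f ∈ E, ∀ g ∈ E, (∀ i ∉ B, f i = g i) → f = g) :
    (randomWord α n).real E ≤ letterProb α ^ #B := by
  have hinj : Set.InjOn (fun f (i : {i // i ∉ B}) => f i) E := fun f hf g hg hfg =>
    h f hf g hg fun i hi => congrFun hfg ⟨i, hi⟩
  have hcard : E.ncard ≤ Fintype.card α ^ (n - #B) := by
    simpa [Set.ncard_univ, Fintype.card_subtype_compl] using
      Set.ncard_le_ncard_of_injOn _ (fun f _ => Set.mem_univ _) hinj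
  have hB : #B ≤ n := by simpa using B.card_le_univ
  calc (randomWord α n).real E
      ≤ (Fintype.card α : ℝ) ^ (n - #B) * letterProb α ^ n := by
        rw [randomWord_real_apply]; gcongr; exact_mod_cast hcard
    _ = (Fintype.card α : ℝ) ^ (n - #B) * letterProb α ^ (n - #B) * letterProb α ^ #B := by
        rw [mul_assoc, ← pow_add, Nat.sub_add_cancel hB]
    _ = letterProb α ^ #B := by rw [card_pow_mul_letterProb_pow α, one_mul]

theorem letterProb_pow_mul_real_le_real_inter [Nonempty α] {E : Set (Fin n → α)}
    {B : Finset (Fin n)} (hE : DependsOn (· ∈ E) (↑B)ᶜ) (w : Fin n → α) :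
    letterProb α ^ #B * (randomWord α n).real E ≤
      (randomWord α n).real (E ∩ {f | ∀ i ∈ B, f i = w i}) := by
  have hmaps : ∀ f ∈ E, (B.piecewise w f, fun i : B => f i) ∈
      (E ∩ {f | ∀ i ∈ B, f i = w i}) ×ˢ (Set.univ : Set (B → α)) := fun f hf =>
    ⟨⟨(hE fun i hi => (B.piecewise_eq_of_notMem w f hi)).mpr hf,
      fun i hi => B.piecewise_eq_of_mem w f hi⟩, Set.mem_univ _⟩
  have hinj : Set.InjOn (fun f => (B.piecewise w f, fun i : B => f i)) E := fun f _ g _ hfg => by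
    obtain ⟨hout, hin⟩ := Prod.mk.inj hfg
    funext i
    by_cases hi : i ∈ B
    · exact congrFun hin ⟨i, hi⟩
    · simpa [hi] using congrFun hout i
  have hcard : E.ncard ≤ (E ∩ {f | ∀ i ∈ B, f i = w i}).ncard * Fintype.card α ^ #B := by
    simpa [Set.ncard_prod, Set.ncard_univ] using Set.ncard_le_ncard_of_injOn _ hmaps hinj
  rw [randomWord_real_apply, randomWord_real_apply]
  calc letterProb α ^ #B * (E.ncard * letterProb α ^ n)
      ≤ letterProb α ^ #B * (((E ∩ {f | ∀ i ∈ B, f i = w i}).ncard * Fintype.card α ^ #B : ℕ) *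
        letterProb α ^ n) := by gcongr
    _ = Fintype.card α ^ #B * letterProb α ^ #B *
        ((E ∩ {f | ∀ i ∈ B, f i = w i}).ncard * letterProb α ^ n) := by push_cast; ring
    _ = _ := by rw [card_pow_mul_letterProb_pow α, one_mul]

theorem integral_randomWord [Nonempty α] (X : (Fin n → α) → ℝ) :
    ∫ f, X f ∂randomWord α n = 1 / (Fintype.card α : ℝ) ^ n * ∑ f, X f := by
  rw [integral_fintype .of_finite, Finset.mul_sum]
  simp [randomWord_real_apply]

theorem randomWord_real_factorsMatch_le [Nonempty α] {p e m : ℕ} (hpe : p < e) (hem : e + m ≤ n) :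
    (randomWord α n).real {f | FactorsMatch (List.ofFn f) p e m} ≤ letterProb α ^ m := by
  let B := (Finset.Ico e (e + m)).attachFin fun i hi => show i < n by grind
  suffices h : (randomWord α n).real {f | FactorsMatch (List.ofFn f) p e m} ≤ letterProb α ^ #B by
    simpa [B] using h
  refine randomWord_real_le_of_determined B fun f hf g hg hfg => ?_
  have hagree (i : ℕ) : ∀ hi : i < n, f ⟨i, hi⟩ = g ⟨i, hi⟩ := by
    induction i using Nat.strong_induction_on with
    | _ i ih =>
      intro hi
      by_cases hib : i ∈ Finset.Ico e (e + m)
      · have hj : i - (e - p) < n := by omega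
        have hij : i = e - p + (i - (e - p)) := by grind
        rw [hf.apply_eq (i := ⟨i, hi⟩) (j := ⟨_, hj⟩) hib hij hpe.le,
          hg.apply_eq (i := ⟨i, hi⟩) (j := ⟨_, hj⟩) hib hij hpe.le]
        exact ih _ (by omega) _
      · exact hfg ⟨i, hi⟩ (by simpa [B] using hib)
  exact funext fun i => hagree i i.2

theorem randomWord_real_runAt_inter_runAt_le [Nonempty α] {c d : α} {r a b : ℕ} (hab : a + r ≤ b)
    (hb : b + r ≤ n) :
    (randomWord α n).real {f | RunAt (List.ofFn f) c r a ∧ RunAt (List.ofFn f) d r b} ≤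
      letterProb α ^ (2 * r) := by
  let B := (Finset.Ico a (a + r) ∪ Finset.Ico b (b + r)).attachFin fun i hi =>
    show i < n by grind
  have hB : #B = 2 * r := by
    rw [Finset.card_attachFin, Finset.card_union_of_disjoint
      (Finset.disjoint_left.2 fun i _ _ => by grind), Nat.card_Ico, Nat.card_Ico]
    omega
  rw [← hB]
  refine randomWord_real_le_of_determined B fun f hf g hg hfg => funext fun i => ?_
  by_cases hi : i ∈ B
  · have ha : a + r ≤ n := by omega
    rcases Finset.mem_union.1 ((Finset.mem_attachFin _).1 hi) with hi | hi
    · rw [(runAt_ofFn_iff ha).1 hf.1 i hi, (runAt_ofFn_iff ha).1 hg.1 i hi]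
    · rw [(runAt_ofFn_iff hb).1 hf.2 i hi, (runAt_ofFn_iff hb).1 hg.2 i hi]
  · exact hfg i hi

theorem randomWord_real_hasRun_inter_hasRun_le [Nonempty α] {r a b M : ℕ} (hab : a + M ≤ b)
    (hb : b + M ≤ n) :
    (randomWord α n).real {f | (∃ c, HasRun (List.ofFn f) c r a (a + M)) ∧
        ∃ c, HasRun (List.ofFn f) c r b (b + M)} ≤
      (Fintype.card α * (M + 1) * letterProb α ^ r) ^ 2 := by
  let starts (lo : ℕ) : Finset (α × ℕ) := Finset.univ ×ˢ Finset.Ico lo (lo + M + 1 - r)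
  have hstarts (lo : ℕ) : #(starts lo) ≤ Fintype.card α * (M + 1) := by
    rw [Finset.card_product, Finset.card_univ, Nat.card_Ico]
    gcongr
    omega
  have hcover : {f : Fin n → α | (∃ c, HasRun (List.ofFn f) c r a (a + M)) ∧
      ∃ c, HasRun (List.ofFn f) c r b (b + M)} ⊆ ⋃ s ∈ starts a ×ˢ starts b,
        {f | RunAt (List.ofFn f) s.1.1 r s.1.2 ∧ RunAt (List.ofFn f) s.2.1 r s.2.2} := by
    rintro f ⟨⟨c, i, hi, hir, hc⟩, d, j, hj, hjr, hd⟩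
    refine Set.mem_biUnion (x := ((c, i), d, j)) ?_ ⟨hc, hd⟩
    simp only [starts, Finset.coe_product, Set.mem_prod, Finset.mem_coe, Finset.mem_univ,
      Finset.mem_Ico, true_and]
    omega
  calc _ ≤ _ := measureReal_mono hcover (measure_ne_top _ _)
    _ ≤ ∑ s ∈ starts a ×ˢ starts b, (randomWord α n).real
        {f | RunAt (List.ofFn f) s.1.1 r s.1.2 ∧ RunAt (List.ofFn f) s.2.1 r s.2.2} :=
        measureReal_biUnion_finset_le _ _
    _ ≤ ∑ _s ∈ starts a ×ˢ starts b, letterProb α ^ (2 * r) := by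
        refine Finset.sum_le_sum fun s hs => randomWord_real_runAt_inter_runAt_le ?_ ?_ <;> grind
    _ = (#(starts a) * #(starts b) : ℕ) * letterProb α ^ (2 * r) := by
        rw [Finset.sum_const, nsmul_eq_mul, Finset.card_product]
    _ ≤ ((Fintype.card α * (M + 1)) * (Fintype.card α * (M + 1)) : ℕ) *
          letterProb α ^ (2 * r) := by
        gcongr <;> exact hstarts _
    _ = _ := by push_cast; ring

theorem randomWord_real_forall_not_runAt_le [Nonempty α] (c : α) {r a t : ℕ} (h : a + r * t ≤ n) :
    (randomWord α n).real {f | ∀ s < t, ¬ RunAt (List.ofFn f) c r (a + r * s)} ≤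
      (1 - letterProb α ^ r) ^ t := by
  induction t with
  | zero => simp
  | succ t ih =>
    rw [Nat.mul_succ, ← Nat.add_assoc] at h
    specialize ih (by omega)
    set E : Set (Fin n → α) := {f | ∀ s < t, ¬ RunAt (List.ofFn f) c r (a + r * s)}
    let B := (Finset.Ico (a + r * t) (a + r * t + r)).attachFin fun i hi => show i < n by grind
    have hB : #B = r := by simp [B]
    have hrun (f : Fin n → α) : RunAt (List.ofFn f) c r (a + r * t) ↔ ∀ i ∈ B, f i = c := by
      simp only [B, runAt_ofFn_iff h, Finset.mem_attachFin]
    have hdep : DependsOn (· ∈ E) (↑B)ᶜ := fun f g hfg =>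
      propext <| forall₂_congr fun s hs => not_congr <| by
        have hst : r * s + r ≤ r * t := by rw [← Nat.mul_succ]; exact Nat.mul_le_mul_left _ hs
        rw [runAt_ofFn_iff (by omega), runAt_ofFn_iff (by omega)]
        refine forall₂_congr fun i hi => ?_
        rw [hfg i ?_]
        simp only [B, Set.mem_compl_iff, Finset.mem_coe, Finset.mem_attachFin,
          Finset.mem_Ico] at hi ⊢
        omega
    have hsplit : {f : Fin n → α | ∀ s < t + 1, ¬ RunAt (List.ofFn f) c r (a + r * s)} ⊆
        E \ {f | ∀ i ∈ B, f i = c} := fun f hf =>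
      ⟨fun s hs => hf s (by omega), fun hc => hf t (by omega) ((hrun f).2 hc)⟩
    have hindep := letterProb_pow_mul_real_le_real_inter hdep fun _ => c
    have hadd := measureReal_inter_add_sdiff (μ := randomWord α n) (s := E)
      (t := {f | ∀ i ∈ B, f i = c}) .of_discrete
    rw [hB] at hindep
    calc _ ≤ (randomWord α n).real (E \ {f | ∀ i ∈ B, f i = c}) := measureReal_mono hsplit
      _ ≤ (1 - letterProb α ^ r) * (randomWord α n).real E := by linarith
      _ ≤ (1 - letterProb α ^ r) * (1 - letterProb α ^ r) ^ t := by
        gcongr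
        exact sub_nonneg.2 (letterProb_pow_le_one α r)
      _ = _ := (pow_succ' _ _).symm

theorem randomWord_real_exists_not_hasRun_le [Nonempty α] {r t : ℕ} (h : r * t ≤ n) :
    (randomWord α n).real {f | ∃ c, ¬ HasRun (List.ofFn f) c r (n - r * t) n} ≤
      Fintype.card α * (1 - letterProb α ^ r) ^ t := by
  have hcover : {f : Fin n → α | ∃ c, ¬ HasRun (List.ofFn f) c r (n - r * t) n} ⊆
      ⋃ c ∈ Finset.univ, {f | ∀ s < t, ¬ RunAt (List.ofFn f) c r (n - r * t + r * s)} := by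
    rintro f ⟨c, hc⟩
    refine Set.mem_biUnion (Finset.mem_univ c) fun s hs hrun => hc ⟨_, by omega, ?_, hrun⟩
    have hst : r * s + r ≤ r * t := by rw [← Nat.mul_succ]; exact Nat.mul_le_mul_left _ hs
    omega
  calc _ ≤ _ := measureReal_mono hcover (measure_ne_top _ _)
    _ ≤ ∑ c, (randomWord α n).real
        {f | ∀ s < t, ¬ RunAt (List.ofFn f) c r (n - r * t + r * s)} :=
      measureReal_biUnion_finset_le _ _
    _ ≤ ∑ _c : α, (1 - letterProb α ^ r) ^ t :=
      Finset.sum_le_sum fun c _ => randomWord_real_forall_not_runAt_le c (by omega)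
    _ = _ := by rw [Finset.sum_const, nsmul_eq_mul, Finset.card_univ]

theorem randomWord_real_hasLongBorder_le [Nontrivial α] (p M k : ℕ) :
    (randomWord α n).real {f | HasLongBorder (List.ofFn f) p k M} ≤
      (k + 1) * (2 * letterProb α ^ M) := by
  have hcover : {f : Fin n → α | HasLongBorder (List.ofFn f) p k M} ⊆
      ⋃ s ∈ Finset.Icc (n - k) n ×ˢ Finset.Ico M (n + 1),
        {f | p < s.1 - s.2 ∧ FactorsMatch (List.ofFn f) p (s.1 - s.2) s.2} := by
    rintro f ⟨e, m, hlo, hhi, hm, hpe, hmatch⟩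
    rw [List.length_ofFn] at hlo hhi
    refine Set.mem_biUnion (x := (e + m, m)) (by grind) ?_
    simpa using ⟨hpe, hmatch⟩
  have hle (q m : ℕ) (hq : q ≤ n) : (randomWord α n).real
      {f | p < q - m ∧ FactorsMatch (List.ofFn f) p (q - m) m} ≤ letterProb α ^ m := by
    by_cases hp : p < q - m
    · simpa only [hp, true_and] using randomWord_real_factorsMatch_le hp (by omega)
    · simp only [hp, false_and, Set.ofPred_false, measureReal_empty]
      positivity
  calc _ ≤ _ := measureReal_mono hcover (measure_ne_top _ _)
    _ ≤ ∑ s ∈ Finset.Icc (n - k) n ×ˢ Finset.Ico M (n + 1), (randomWord α n).real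
        {f | p < s.1 - s.2 ∧ FactorsMatch (List.ofFn f) p (s.1 - s.2) s.2} :=
      measureReal_biUnion_finset_le _ _
    _ ≤ ∑ s ∈ Finset.Icc (n - k) n ×ˢ Finset.Ico M (n + 1), letterProb α ^ s.2 :=
      Finset.sum_le_sum fun s hs => hle _ _ (by grind)
    _ = #(Finset.Icc (n - k) n) * ∑ m ∈ Finset.Ico M (n + 1), letterProb α ^ m := by
      simp only [Finset.sum_product, Finset.sum_const, nsmul_eq_mul]
    _ ≤ _ := by
      gcongr
      · rw [Nat.card_Icc]
        exact_mod_cast (by omega : n + 1 - (n - k) ≤ k + 1)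
      · exact sum_Ico_letterProb_pow_le α _ _

theorem randomWord_real_muf_add_lt_le [Nontrivial α] {r t M : ℕ} (hM : M ≤ r * t) :
    (randomWord α n).real {f | muf (List.ofFn f) + (r * t + M) < n} ≤
      (Fintype.card α * (M + 1) * letterProb α ^ r) ^ 2 +
        Fintype.card α * (1 - letterProb α ^ r) ^ t +
        2 * ((r * t + 1) * (2 * letterProb α ^ M)) := by
  rcases le_or_gt n (r * t + M) with hn | hn
  · have hempty : {f : Fin n → α | muf (List.ofFn f) + (r * t + M) < n} = ∅ :=
      Set.eq_empty_of_forall_notMem fun f hf => by grind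
    have := sub_nonneg.2 (letterProb_pow_le_one α r)
    rw [hempty, measureReal_empty]
    positivity
  let starts : Set (Fin n → α) := {f | (∃ c, HasRun (List.ofFn f) c r 0 (0 + M)) ∧
    ∃ c, HasRun (List.ofFn f) c r M (M + M)}
  let ends : Set (Fin n → α) := {f | ∃ c, ¬ HasRun (List.ofFn f) c r (n - r * t) n}
  let long (p : ℕ) : Set (Fin n → α) := {f | HasLongBorder (List.ofFn f) p (r * t) M}
  have hcover : {f : Fin n → α | muf (List.ofFn f) + (r * t + M) < n} ⊆
      starts ∪ (ends ∪ (long 0 ∪ long M)) := fun f hf => by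
    have := hasRun_or_not_hasRun_or_hasLongBorder (S := List.ofFn f) (r := r)
      (by rw [List.length_ofFn]; exact hf)
    rwa [List.length_ofFn] at this
  have hlong (p : ℕ) : (randomWord α n).real (long p) ≤ (r * t + 1) * (2 * letterProb α ^ M) :=
    mod_cast randomWord_real_hasLongBorder_le p M (r * t)
  calc _ ≤ _ := measureReal_mono hcover (measure_ne_top _ _)
    _ ≤ (randomWord α n).real starts + ((randomWord α n).real ends +
        ((randomWord α n).real (long 0) + (randomWord α n).real (long M))) := by
      refine (measureReal_union_le _ _).trans ?_
      gcongr
      refine (measureReal_union_le _ _).trans ?_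
      gcongr
      exact measureReal_union_le _ _
    _ ≤ _ := by
      rw [two_mul, add_assoc]
      gcongr
      · exact randomWord_real_hasRun_inter_hasRun_le (by omega) (by omega)
      · exact randomWord_real_exists_not_hasRun_le (by omega)
      · exact hlong 0
      · exact hlong M

end RandomWord

theorem le_sum_range_ite_lt {K : ℕ → ℕ} (hK : K 0 = 0) {d R : ℕ} (hd : d ≤ K R) :
    d ≤ ∑ r ∈ Finset.range R, if K r < d then K (r + 1) else 0 := by
  induction R with
  | zero => omega
  | succ R ih =>
    rw [Finset.sum_range_succ]
    by_cases h : K R < d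
    · rw [if_pos h]; omega
    · exact (ih (not_lt.1 h)).trans (Nat.le_add_right _ _)

theorem integral_natCast_le_sum_mul_measureReal_lt {Ω : Type*} [MeasurableSpace Ω]
    {μ : Measure Ω} [IsFiniteMeasure μ] {X : Ω → ℕ} (hX : Measurable X) {K : ℕ → ℕ}
    (hK : K 0 = 0) {R : ℕ} (hR : ∀ ω, X ω ≤ K R) :
    ∫ ω, (X ω : ℝ) ∂μ ≤ ∑ r ∈ Finset.range R, K (r + 1) * μ.real {ω | K r < X ω} := by
  have hmeas (r : ℕ) : MeasurableSet {ω | K r < X ω} := measurableSet_lt measurable_const hX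
  have hint (r : ℕ) : Integrable ({ω | K r < X ω}.indicator fun _ => (K (r + 1) : ℝ)) μ :=
    (integrable_const _).indicator (hmeas r)
  calc ∫ ω, (X ω : ℝ) ∂μ
      ≤ ∫ ω, ∑ r ∈ Finset.range R, {ω | K r < X ω}.indicator (fun _ => (K (r + 1) : ℝ)) ω ∂μ := by
        refine integral_mono_of_nonneg (.of_forall fun ω => Nat.cast_nonneg _)
          (integrable_finsetSum _ fun r _ => hint r) (.of_forall fun ω => ?_)
        simpa [Set.indicator_apply] using
          (Nat.cast_le (α := ℝ)).2 (le_sum_range_ite_lt hK (hR ω))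
    _ = _ := by
        rw [integral_finsetSum _ fun r _ => hint r]
        refine Finset.sum_congr rfl fun r _ => ?_
        rw [integral_indicator_const _ (hmeas r), smul_eq_mul, mul_comm]

/-- Thresholds for the deficit `n - muf`: over an alphabet of size `σ`, a random word has a deficit
exceeding `deficitThreshold σ r` only with probability `O(r ^ 2 * σ ^ (-2 * r))`. The first summand
is the room for `2 * σ * r * σ ^ r` disjoint blocks of length `r`, the second the offset between
the two starting positions tried in `sub_le_muf`. -/
def deficitThreshold (σ r : ℕ) : ℕ := r * (2 * σ * r * σ ^ r) + 3 * r

theorem deficitThreshold_succ_le {σ : ℕ} (hσ : 2 ≤ σ) (r : ℕ) :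
    deficitThreshold σ (r + 1) ≤ 4 * σ ^ 2 * (r + 1) ^ 2 * σ ^ r := by
  have hpow : 1 ≤ σ ^ r := Nat.one_le_pow _ _ (by omega)
  have hsmall : 3 * (r + 1) ≤ 2 * σ ^ 2 * (r + 1) ^ 2 * σ ^ r :=
    calc 3 * (r + 1) ≤ 2 * 2 ^ 2 * (r + 1) ^ 2 * 1 := by nlinarith
      _ ≤ _ := by gcongr
  rw [deficitThreshold, pow_succ]
  linarith

theorem three_mul_le_mul_mul_pow {σ : ℕ} (hσ : 2 ≤ σ) (r : ℕ) :
    3 * r ≤ r * (2 * σ * r * σ ^ r) := by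
  rcases r.eq_zero_or_pos with rfl | (hr : 1 ≤ r)
  · simp
  have hpow : 1 ≤ σ ^ r := Nat.one_le_pow _ _ (by omega)
  calc 3 * r ≤ r * (2 * 2 * 1 * 1) := by omega
    _ ≤ _ := by gcongr

theorem one_sub_letterProb_pow_pow_le (α : Type*) [Fintype α] [Nonempty α] (r : ℕ) :
    (1 - letterProb α ^ r) ^ (2 * Fintype.card α * r * Fintype.card α ^ r) ≤
      letterProb α ^ (2 * r) := by
  have hexp : Real.exp (-Fintype.card α) ≤ letterProb α := by
    rw [Real.exp_neg]
    exact inv_anti₀ (by positivity) ((le_add_of_nonneg_right zero_le_one).trans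
      (Real.add_one_le_exp _))
  calc (1 - letterProb α ^ r) ^ (2 * Fintype.card α * r * Fintype.card α ^ r)
      ≤ Real.exp (-letterProb α ^ r) ^ (2 * Fintype.card α * r * Fintype.card α ^ r) :=
        pow_le_pow_left₀ (sub_nonneg.2 (letterProb_pow_le_one α r)) (Real.one_sub_le_exp_neg _) _
    _ = Real.exp (-Fintype.card α) ^ (2 * r) := by
        rw [← Real.exp_nat_mul, ← Real.exp_nat_mul]
        push_cast
        congr 1
        linear_combination -2 * Fintype.card α * r * card_pow_mul_letterProb_pow α r
    _ ≤ _ := by gcongr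

section Threshold

variable {α : Type*} [Fintype α] [Nontrivial α] [MeasurableSpace α] [MeasurableSingletonClass α]

theorem randomWord_real_muf_add_deficitThreshold_lt_le (n r : ℕ) :
    (randomWord α n).real
        {f | muf (List.ofFn f) + deficitThreshold (Fintype.card α) r < n} ≤
      14 * Fintype.card α ^ 2 * (r + 1) ^ 2 * letterProb α ^ (2 * r) := by
  set σ := Fintype.card α
  set x := letterProb α
  have hσ : (2 : ℝ) ≤ σ := mod_cast Fintype.one_lt_card
  have hσx : (σ : ℝ) ^ r * x ^ r = 1 := card_pow_mul_letterProb_pow α r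
  have hx : x ^ r ≤ 1 := letterProb_pow_le_one α r
  have hlong : (r * (2 * σ * r * σ ^ r) + 1 : ℝ) * (2 * x ^ (3 * r)) ≤
      (4 * σ * r ^ 2 + 2) * x ^ (2 * r) := by
    calc _ = (4 * σ * r ^ 2 * (σ ^ r * x ^ r) + 2 * x ^ r) * x ^ (2 * r) := by ring
      _ ≤ _ := by rw [hσx, mul_one]; gcongr; linarith
  have hcoeff : (σ * (3 * r + 1)) ^ 2 + σ + 2 * (4 * σ * r ^ 2 + 2) ≤
      14 * (σ : ℝ) ^ 2 * (r + 1) ^ 2 := by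
    have hr : (0 : ℝ) ≤ r := r.cast_nonneg
    nlinarith [mul_nonneg (sub_nonneg.2 hσ) (sq_nonneg (r : ℝ)), mul_nonneg (sq_nonneg (σ : ℝ)) hr]
  calc _ ≤ (σ * (3 * r + 1) * x ^ r) ^ 2 + σ * (1 - x ^ r) ^ (2 * σ * r * σ ^ r) +
        2 * ((r * (2 * σ * r * σ ^ r) + 1) * (2 * x ^ (3 * r))) :=
      mod_cast randomWord_real_muf_add_lt_le (three_mul_le_mul_mul_pow Fintype.one_lt_card r)
    _ ≤ (σ * (3 * r + 1) * x ^ r) ^ 2 + σ * x ^ (2 * r) +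
        2 * ((4 * σ * r ^ 2 + 2) * x ^ (2 * r)) := by
      gcongr
      exact one_sub_letterProb_pow_pow_le α r
    _ = ((σ * (3 * r + 1)) ^ 2 + σ + 2 * (4 * σ * r ^ 2 + 2)) * x ^ (2 * r) := by ring
    _ ≤ _ := by gcongr

theorem integral_sub_muf_le_sum (n : ℕ) :
    ∫ f, ((n - muf (List.ofFn f) : ℕ) : ℝ) ∂randomWord α n ≤
      ∑ r ∈ Finset.range n, deficitThreshold (Fintype.card α) (r + 1) *
        (14 * Fintype.card α ^ 2 * (r + 1) ^ 2 * letterProb α ^ (2 * r)) := by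
  have hzero : deficitThreshold (Fintype.card α) 0 = 0 := by simp only [deficitThreshold, zero_mul]
  have hle (f : Fin n → α) : n - muf (List.ofFn f) ≤ deficitThreshold (Fintype.card α) n := by
    rw [deficitThreshold]; omega
  refine (integral_natCast_le_sum_mul_measureReal_lt .of_discrete hzero hle).trans ?_
  simp only [Nat.lt_sub_iff_add_lt']
  gcongr with r
  exact randomWord_real_muf_add_deficitThreshold_lt_le n r

theorem natCast_sub_sum_le_integral_muf (n : ℕ) :
    (n : ℝ) - ∑ r ∈ Finset.range n, deficitThreshold (Fintype.card α) (r + 1) *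
        (14 * Fintype.card α ^ 2 * (r + 1) ^ 2 * letterProb α ^ (2 * r)) ≤
      ∫ f, (muf (List.ofFn f) : ℝ) ∂randomWord α n := by
  calc _ ≤ n - ∫ f, ((n - muf (List.ofFn f) : ℕ) : ℝ) ∂randomWord α n := by
        gcongr
        exact integral_sub_muf_le_sum n
    _ = ∫ f, ((n : ℝ) - (n - muf (List.ofFn f) : ℕ)) ∂randomWord α n := by
      rw [integral_sub (integrable_const _) .of_finite, integral_const, probReal_univ, one_smul]
    _ ≤ _ := by
      refine integral_mono .of_finite .of_finite fun f => ?_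
      change (n : ℝ) - (n - muf (List.ofFn f) : ℕ) ≤ muf (List.ofFn f)
      rw [sub_le_iff_le_add']
      exact_mod_cast (le_tsub_add : n ≤ n - muf (List.ofFn f) + muf (List.ofFn f))

end Threshold

theorem summable_deficitThreshold_mul_letterProb_pow (α : Type*) [Fintype α] [Nontrivial α] :
    Summable fun r : ℕ => (deficitThreshold (Fintype.card α) (r + 1) : ℝ) *
      (14 * Fintype.card α ^ 2 * (r + 1) ^ 2 * letterProb α ^ (2 * r)) := by
  have hx : ‖letterProb α‖ < 1 := by
    rw [Real.norm_of_nonneg (by positivity)]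
    linarith [letterProb_le_half α]
  have hgeom : Summable fun r : ℕ => ((r + 1 : ℕ) : ℝ) ^ 4 * letterProb α ^ (r + 1) :=
    (summable_nat_add_iff 1 (f := fun r : ℕ => (r : ℝ) ^ 4 * letterProb α ^ r)).2
      (summable_pow_mul_geometric_of_norm_lt_one 4 hx)
  refine (hgeom.mul_left (56 * (Fintype.card α : ℝ) ^ 5)).of_nonneg_of_le
    (fun r => by positivity) fun r => ?_
  calc _ ≤ 4 * Fintype.card α ^ 2 * (r + 1) ^ 2 * Fintype.card α ^ r *
        (14 * Fintype.card α ^ 2 * (r + 1) ^ 2 * letterProb α ^ (2 * r)) := by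
        gcongr; exact_mod_cast deficitThreshold_succ_le Fintype.one_lt_card r
    _ = 56 * Fintype.card α ^ 5 * ((r + 1 : ℕ) ^ 4 * letterProb α ^ (r + 1)) := by
        have h₁ := card_pow_mul_letterProb_pow α 1
        have hr := card_pow_mul_letterProb_pow α r
        generalize letterProb α = x at h₁ hr ⊢
        push_cast
        linear_combination 56 * (Fintype.card α : ℝ) ^ 4 * (r + 1) ^ 4 * x ^ r * (hr - h₁)

theorem expected_muf_ge_xi_bound_general (α : Type*) [Fintype α] [Nontrivial α] :
    ∃ C : ℝ, ∀ n : ℕ,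
      n - C ≤ 1 / (Fintype.card α : ℝ) ^ n * ∑ f : Fin n → α, (muf (List.ofFn f) : ℝ) := by
  let _ : MeasurableSpace α := ⊤
  refine ⟨∑' r : ℕ, deficitThreshold (Fintype.card α) (r + 1) *
    (14 * Fintype.card α ^ 2 * (r + 1) ^ 2 * letterProb α ^ (2 * r)), fun n => ?_⟩
  rw [← integral_randomWord]
  refine le_trans ?_ (natCast_sub_sum_le_integral_muf n)
  gcongr
  exact (summable_deficitThreshold_mul_letterProb_pow α).sum_le_tsum _ fun r _ => by positivity

/-- The factor `ξ(σ)` in the error term of `expected_muf_ge_xi_bound`. -/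
noncomputable def xi (σ : ℕ) : ℝ :=
  if σ = 2 then 8
  else (2 * (σ : ℝ) ^ 3 - 2 * (σ : ℝ) ^ 2) / (((σ : ℝ) - 2) * ((σ : ℝ) ^ 2 - 2 * (σ : ℝ) + 2))

theorem xi_nonneg {σ : ℕ} (hσ : 2 ≤ σ) : 0 ≤ xi σ := by
  have hσ' : (2 : ℝ) ≤ σ := mod_cast hσ
  unfold xi
  split_ifs
  · norm_num
  · exact div_nonneg (by nlinarith [sq_nonneg (σ : ℝ)])
      (mul_nonneg (by linarith) (by nlinarith))

theorem expected_muf_ge_xi_bound (σ : ℕ) (hσ : 2 ≤ σ) :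
    ∃ C : ℝ, ∀ n : ℕ, 1 ≤ n →
      (1 / (σ : ℝ) ^ n) * ∑ f : Fin n → Fin σ, (muf (List.ofFn f) : ℝ) ≥
        (n : ℝ) * (1 - (if σ = 2 then (8 : ℝ)
            else (2 * (σ : ℝ) ^ 3 - 2 * (σ : ℝ) ^ 2) /
              (((σ : ℝ) - 2) * ((σ : ℝ) ^ 2 - 2 * (σ : ℝ) + 2))) / (σ : ℝ) ^ 4) - C := by
  have := Fin.nontrivial_iff_two_le.2 hσ
  obtain ⟨C, hC⟩ := expected_muf_ge_xi_bound_general (Fin σ)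
  refine ⟨C, fun n _ => ge_iff_le.2 <| le_trans ?_ (by simpa only [Fintype.card_fin] using hC n)⟩
  change n * (1 - xi σ / σ ^ 4) - C ≤ n - C
  gcongr
  exact mul_le_of_le_one_right n.cast_nonneg
    (sub_le_self _ (div_nonneg (xi_nonneg hσ) (by positivity)))
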